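/- Let b be a prime, m = b², and let s > 1 be a real number. Then Σ_{p prime, p > m} S°(p mod m)·p^{−s} = Σ_χ Ŝ°(χ)·Σ_{p prime, p > m} χ(p)·p^{−s}, where the outer sum on the right runs over all primitive odd Dirichlet characters χ modulo m (all other characters contribute zero). -/

import Mathlib

open Finset
open scoped Classical

namespace Collision

/-- The diagonal set `G = {n < b² : ⌊n/b⌋ = n mod b}`. -/
def diagSet (b : ℕ) : Finset ℕ :=
  (Finset.range (b ^ 2)).filter (fun n => n / b = n % b)

/-- The slice increment `d_n(a) = ⌊(n+1)a/b²⌋ − ⌊na/b²⌋`. -/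
def d (b n a : ℕ) : ℤ :=
  ((((n + 1) * a) / b ^ 2 : ℕ) : ℤ) - (((n * a) / b ^ 2 : ℕ) : ℤ)

/-- The collision invariant `S(a) = −1 − ⌊a/b⌋ + Σ_{n∈G} d_n(a)`. -/
def S (b a : ℕ) : ℤ :=
  -1 - ((a / b : ℕ) : ℤ) + ∑ n ∈ diagSet b, d b n a

/-- The units `a' ∈ {0,…,b²−1}` with `a' ≡ a (mod b)`. -/
def cosetUnits (b a : ℕ) : Finset ℕ :=
  (Finset.range (b ^ 2)).filter (fun a' => Nat.gcd a' (b ^ 2) = 1 ∧ a' % b = a % b)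

/-- The centered collision invariant `S°(a)`. -/
noncomputable def Scirc (b a : ℕ) : ℝ :=
  (S b a : ℝ) - (1 / (b : ℝ)) * ∑ a' ∈ cosetUnits b a, (S b a' : ℝ)

/-- The Fourier coefficient `Ŝ°(χ) = (1/φ(b²))·Σ_a S°(a)·χ̄(a)`. -/
noncomputable def Shat (b : ℕ) (χ : DirichletCharacter ℂ (b ^ 2)) : ℂ :=
  (1 / (Nat.totient (b ^ 2) : ℂ)) *
    ∑ a ∈ Finset.range (b ^ 2), (Scirc b a : ℂ) * starRingEnd ℂ (χ (a : ZMod (b ^ 2)))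

/-- The generalized first Bernoulli number `B_{1,χ̄} = (1/b²)·Σ_a a·χ̄(a)`. -/
noncomputable def B1bar (b : ℕ) (χ : DirichletCharacter ℂ (b ^ 2)) : ℂ :=
  (1 / ((b : ℂ) ^ 2)) *
    ∑ a ∈ Finset.range (b ^ 2), (a : ℂ) * starRingEnd ℂ (χ (a : ZMod (b ^ 2)))

/-- The diagonal character sum `S_G(χ) = Σ_{n∈G} [χ̄(n+1) − χ̄(n)]`. -/
noncomputable def SG (b : ℕ) (χ : DirichletCharacter ℂ (b ^ 2)) : ℂ :=
  ∑ n ∈ diagSet b,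
    (starRingEnd ℂ (χ ((n + 1 : ℕ) : ZMod (b ^ 2))) - starRingEnd ℂ (χ (n : ZMod (b ^ 2))))

end Collision

namespace Collision

lemma gcd_iff {b : ℕ} (hb : b.Prime) (a : ℕ) : Nat.gcd a (b ^ 2) = 1 ↔ a % b ≠ 0 := by
  have : Nat.gcd a (b ^ 2) = 1 ↔ Nat.Coprime a b :=
    Nat.coprime_pow_right_iff (by norm_num) a b
  rw [this, Nat.coprime_comm, hb.coprime_iff_not_dvd, Nat.dvd_iff_mod_eq_zero]

lemma mem_cu {b : ℕ} (hb : b.Prime) {a : ℕ} (ha : a % b ≠ 0) (x : ℕ) :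
    x ∈ cosetUnits b a ↔ x < b ^ 2 ∧ x % b = a % b := by
  unfold cosetUnits
  rw [mem_filter, mem_range, gcd_iff hb]
  constructor
  · rintro ⟨h1, h2, h3⟩; exact ⟨h1, h3⟩
  · rintro ⟨h1, h3⟩; exact ⟨h1, by rw [h3]; exact ha, h3⟩

lemma card_cu {b : ℕ} (hb : b.Prime) {a : ℕ} (ha : a % b ≠ 0) :
    (cosetUnits b a).card = b := by
  have hb0 := hb.pos
  conv_rhs => rw [← card_range b]
  refine card_nbij' (fun x => x / b) (fun k => a % b + b * k) ?_ ?_ ?_ ?_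
  · intro x hx
    have := (mem_cu hb ha x).1 hx
    simp only [coe_range, Set.mem_Iio]
    rw [Nat.div_lt_iff_lt_mul hb0, ← sq]; exact this.1
  · intro k hk
    simp only [coe_range, Set.mem_Iio] at hk
    refine (mem_cu hb ha _).2 ⟨?_, ?_⟩
    · have := Nat.mod_lt a hb0
      nlinarith
    · simp
  · intro x hx
    have := (mem_cu hb ha x).1 hx
    simp only
    rw [← this.2]; exact Nat.mod_add_div x b
  · intro k hk
    simp only
    rw [Nat.add_mul_div_left _ _ hb0, Nat.div_eq_of_lt (Nat.mod_lt a hb0), zero_add]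

lemma card_diag {b : ℕ} (hb : b.Prime) : (diagSet b).card = b := by
  have hb0 := hb.pos
  conv_rhs => rw [← card_range b]
  refine card_nbij' (fun x => x % b) (fun k => k + b * k) ?_ ?_ ?_ ?_
  · intro x hx
    simp only [coe_range, Set.mem_Iio]
    exact Nat.mod_lt _ hb0
  · intro k hk
    simp only [coe_range, Set.mem_Iio] at hk
    simp only [diagSet, coe_filter, mem_range, Set.mem_ofPred_eq]
    refine ⟨by nlinarith, ?_⟩
    rw [Nat.add_mul_div_left _ _ hb0, Nat.div_eq_of_lt hk]
    simp [Nat.mod_eq_of_lt hk]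
  · intro x hx
    simp only [diagSet, coe_filter, mem_range, Set.mem_ofPred_eq] at hx
    simp only
    conv_lhs => rw [← hx.2]
    conv_lhs => enter [1]; rw [hx.2]
    exact Nat.mod_add_div x b
  · intro k hk
    simp only [coe_range, Set.mem_Iio] at hk
    simp [Nat.mod_eq_of_lt hk]

lemma floor_add {m a n : ℕ} (hm : 0 < m) (ha : a < m) (hc : Nat.Coprime a m)
    (hn : n < m) (hn0 : 0 < n) :
    n * a / m + n * (m - a) / m + 1 = n := by
  have h1 : n * (m - a) + n * a = n * m := by rw [← mul_add, Nat.sub_add_cancel ha.le]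
  have hr := Nat.mod_lt (n * a) hm
  have hr' := Nat.mod_lt (n * (m - a)) hm
  have e1 := Nat.div_add_mod (n * a) m
  have e2 := Nat.div_add_mod (n * (m - a)) m
  have hne : n * a % m ≠ 0 := by
    intro h
    have := hc.symm.dvd_of_dvd_mul_right (Nat.dvd_of_mod_eq_zero h)
    exact absurd (Nat.le_of_dvd hn0 this) (by omega)
  set q := n * a / m
  set q' := n * (m - a) / m
  have hs : m * (q + q') + (n * a % m + n * (m - a) % m) = m * n := by
    rw [mul_comm m n, ← h1]; linarith [mul_add m q q']
  have : q + q' < n := by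
    by_contra h
    push Not at h
    have := Nat.mul_le_mul_left m h
    omega
  have : n < q + q' + 2 := by
    by_contra h
    push Not at h
    have := Nat.mul_le_mul_left m h
    rw [mul_add] at this
    omega
  omega

lemma d_add {b a n : ℕ} (hb : b.Prime) (ha : a < b ^ 2) (hc : Nat.Coprime a (b ^ 2))
    (hn : n < b ^ 2) :
    d b n a + d b n (b ^ 2 - a) = 1 + (if n = b ^ 2 - 1 then 1 else 0) - (if n = 0 then 1 else 0) := by
  have hm : 0 < b ^ 2 := pow_pos hb.pos 2
  have hm2 : 1 < b ^ 2 := Nat.one_lt_pow (by norm_num) hb.one_lt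
  unfold d
  generalize b ^ 2 = m at *
  have A : (((n + 1) * a / m : ℕ) : ℤ) + (((n + 1) * (m - a) / m : ℕ) : ℤ)
      = n + (if n = m - 1 then 1 else 0) := by
    split_ifs with h
    · have : n + 1 = m := by omega
      rw [this, Nat.mul_div_cancel_left _ hm, Nat.mul_div_cancel_left _ hm]; omega
    · have := floor_add hm ha hc (n := n + 1) (by omega) (by omega)
      omega
  have B : ((n * a / m : ℕ) : ℤ) + ((n * (m - a) / m : ℕ) : ℤ)
      = n - 1 + (if n = 0 then 1 else 0) := by
    split_ifs with h
    · subst h; simp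
    · have := floor_add hm ha hc (n := n) (by omega) (by omega)
      omega
  linarith

lemma S_add {b a : ℕ} (hb : b.Prime) (ha : a < b ^ 2) (hc : a % b ≠ 0) :
    S b a + S b (b ^ 2 - a) = -1 := by
  have hb0 := hb.pos
  have hm2 : 1 < b ^ 2 := Nat.one_lt_pow (by norm_num) hb.one_lt
  have hs : ∑ n ∈ diagSet b, d b n a + ∑ n ∈ diagSet b, d b n (b ^ 2 - a) = b := by
    rw [← sum_add_distrib]
    rw [sum_congr rfl (g := fun n => (1 : ℤ) + (if n = b ^ 2 - 1 then 1 else 0)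
      - (if n = 0 then 1 else 0))]
    · rw [sum_sub_distrib, sum_add_distrib, sum_ite_eq', sum_ite_eq']
      have h0 : 0 ∈ diagSet b := by simp [diagSet, hb0]
      have h1 : b ^ 2 - 1 ∈ diagSet b := by
        simp only [diagSet, mem_filter, mem_range]
        refine ⟨by omega, ?_⟩
        obtain ⟨c, rfl⟩ : ∃ c, b = c + 1 := ⟨b - 1, by omega⟩
        have : (c + 1) ^ 2 - 1 = c + (c + 1) * c := by
          have : (c + 1) ^ 2 = c + (c + 1) * c + 1 := by ring
          omega
        rw [this, Nat.add_mul_div_left _ _ hb0, Nat.div_eq_of_lt (Nat.lt_succ_self c)]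
        simp
      rw [if_pos h0, if_pos h1]
      simp [card_diag hb]
    · intro n hn
      simp only [diagSet, mem_filter, mem_range] at hn
      exact d_add hb ha ((gcd_iff hb a).2 hc) hn.1
  have hf : b * 1 = b := mul_one b
  have hq : a / b + (b ^ 2 - a) / b + 1 = b := by
    have e1 := Nat.div_add_mod a b
    have hr := Nat.mod_lt a hb0
    have hq : a / b < b := by rw [Nat.div_lt_iff_lt_mul hb0, ← sq]; exact ha
    obtain ⟨k, hk⟩ : ∃ k, b = a / b + k + 1 := ⟨b - a / b - 1, by omega⟩
    have : b ^ 2 - a = (b - a % b) + b * k := by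
      have : b ^ 2 = b * (a / b) + b * k + b := by
        rw [sq]; nth_rw 2 [hk]; ring
      omega
    rw [this, Nat.add_mul_div_left _ _ hb0, Nat.div_eq_of_lt (a := b - a % b) (Nat.sub_lt hb0 (Nat.pos_of_ne_zero hc))]
    omega
  unfold S
  have : ((a / b : ℕ) : ℤ) + (((b ^ 2 - a) / b : ℕ) : ℤ) + 1 = b := by exact_mod_cast hq
  linarith

lemma sub_mod {b a a' : ℕ} (ha : a < b ^ 2) (ha' : a' < b ^ 2) (h : a % b = a' % b) :
    (b ^ 2 - a) % b = (b ^ 2 - a') % b := by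
  have h1 : (b ^ 2 - a) + a ≡ (b ^ 2 - a') + a' [MOD b] := by
    rw [Nat.sub_add_cancel ha.le, Nat.sub_add_cancel ha'.le]
  exact Nat.ModEq.add_right_cancel h h1

lemma sub_mod_ne {b a : ℕ} (ha : a < b ^ 2) (hc : a % b ≠ 0) : (b ^ 2 - a) % b ≠ 0 := by
  intro h
  apply hc
  have h1 := Nat.dvd_of_mod_eq_zero h
  have h2 : b ∣ b ^ 2 := dvd_pow_self b (by norm_num)
  have := (Nat.dvd_add_right h1 (c := a)).1 (by rwa [Nat.sub_add_cancel ha.le])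
  exact Nat.mod_eq_zero_of_dvd this

lemma Scirc_neg {b a : ℕ} (hb : b.Prime) (ha : a < b ^ 2) (hc : a % b ≠ 0) :
    Scirc b (b ^ 2 - a) = - Scirc b a := by
  have hb0 := hb.pos
  have hpos : ∀ x, x % b ≠ 0 → 0 < x := fun x hx => Nat.pos_of_ne_zero (by rintro rfl; simp at hx)
  have hc' := sub_mod_ne ha hc
  have ha0 := hpos a hc
  have hs : ∑ x ∈ cosetUnits b (b ^ 2 - a), (S b x : ℝ)
      = ∑ x ∈ cosetUnits b a, (-1 - (S b x : ℝ)) := by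
    refine sum_nbij' (fun x => b ^ 2 - x) (fun x => b ^ 2 - x) ?_ ?_ ?_ ?_ ?_
    · intro x hx
      rw [mem_cu hb hc'] at hx
      have := hpos x (by rw [hx.2]; exact hc')
      rw [mem_cu hb hc]
      refine ⟨by omega, ?_⟩
      rw [sub_mod hx.1 (a' := b ^ 2 - a) (by omega) hx.2]
      congr 1; omega
    · intro x hx
      rw [mem_cu hb hc] at hx
      have := hpos x (by rw [hx.2]; exact hc)
      rw [mem_cu hb hc']
      exact ⟨by omega, sub_mod hx.1 ha hx.2⟩
    · intro x hx
      rw [mem_cu hb hc'] at hx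
      omega
    · intro x hx
      rw [mem_cu hb hc] at hx
      omega
    · intro x hx
      rw [mem_cu hb hc'] at hx
      have := S_add hb hx.1 (by rw [hx.2]; exact hc')
      have : (S b x : ℝ) + S b (b ^ 2 - x) = -1 := by exact_mod_cast this
      linarith
  have h1 : (S b a : ℝ) + S b (b ^ 2 - a) = -1 := by exact_mod_cast S_add hb ha hc
  unfold Scirc
  rw [hs, sum_sub_distrib, sum_const, card_cu hb hc, nsmul_eq_mul]
  have : (b : ℝ) ≠ 0 := by exact_mod_cast hb0.ne'
  field_simp
  linear_combination (b : ℝ) * h1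

lemma char_zero {b a : ℕ} (hb : b.Prime) (χ : DirichletCharacter ℂ (b ^ 2)) (ha : a % b = 0) :
    χ (a : ZMod (b ^ 2)) = 0 := by
  apply χ.map_nonunit
  rw [ZMod.isUnit_iff_coprime]
  intro h
  exact (gcd_iff hb a).1 h ha

lemma sum_even {b : ℕ} (hb : b.Prime) (χ : DirichletCharacter ℂ (b ^ 2)) (h : ¬ χ.Odd) :
    Shat b χ = 0 := by
  have he : χ.Even := χ.even_or_odd.resolve_right h
  unfold Shat
  set f : ℕ → ℂ := fun a => (Scirc b a : ℂ) * starRingEnd ℂ (χ (a : ZMod (b ^ 2))) with hf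
  have h0 : ∀ a, a % b = 0 → f a = 0 := fun a ha => by simp [hf, char_zero hb χ ha]
  have key : ∀ a, a < b ^ 2 → a % b ≠ 0 → f (b ^ 2 - a) = - f a := by
    intro a ha hc
    simp only [hf]
    rw [Scirc_neg hb ha hc, Nat.cast_sub ha.le, ZMod.natCast_self, zero_sub, he.eval_neg]
    push_cast; ring
  have hpos : ∀ x, x % b ≠ 0 → 0 < x := fun x hx => Nat.pos_of_ne_zero (by rintro rfl; simp at hx)
  have hz : ∑ a ∈ range (b ^ 2), f a = - ∑ a ∈ range (b ^ 2), f a := by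
    rw [← sum_filter_of_ne (p := fun a => a % b ≠ 0) (fun a _ hne hz => hne (h0 a hz))]
    rw [← sum_neg_distrib]
    refine sum_nbij' (fun x => b ^ 2 - x) (fun x => b ^ 2 - x) ?_ ?_ ?_ ?_ ?_
    all_goals
      intro x hx
      rw [mem_filter, mem_range] at hx
      have := hpos x hx.2
    · rw [mem_filter, mem_range]; exact ⟨by omega, sub_mod_ne hx.1 hx.2⟩
    · rw [mem_filter, mem_range]; exact ⟨by omega, sub_mod_ne hx.1 hx.2⟩
    · omega
    · omega
    · rw [key x hx.1 hx.2, neg_neg]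
  have : ∑ a ∈ range (b ^ 2), f a = 0 := by linear_combination (1 / 2 : ℂ) * hz
  rw [this, mul_zero]

lemma char_const {b : ℕ} (hb : b.Prime) (χ : DirichletCharacter ℂ (b ^ 2)) (h : ¬ χ.IsPrimitive)
    {a a' : ℕ} (ha : a % b ≠ 0) (hh : a % b = a' % b) :
    χ (a : ZMod (b ^ 2)) = χ (a' : ZMod (b ^ 2)) := by
  have hd : χ.conductor ∣ b := by
    obtain ⟨i, hi, hc⟩ := (Nat.dvd_prime_pow hb).1 χ.conductor_dvd_level
    have : i ≠ 2 := by rintro rfl; exact h hc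
    have : i = 0 ∨ i = 1 := by omega
    rcases this with rfl | rfl <;> simp [hc]
  obtain ⟨hdv, χ₀, hχ⟩ := χ.factorsThrough_conductor
  have hu : ∀ x : ℕ, x % b ≠ 0 → χ (x : ZMod (b ^ 2)) = χ₀ (x : ZMod χ.conductor) := by
    intro x hx
    have hux : IsUnit (x : ZMod (b ^ 2)) := (ZMod.isUnit_iff_coprime _ _).2 ((gcd_iff hb x).2 hx)
    conv_lhs => rw [hχ]
    have := DirichletCharacter.changeLevel_eq_cast_of_dvd χ₀ hdv hux.unit
    rw [IsUnit.unit_spec] at this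
    rw [this, ZMod.cast_natCast hdv]
  rw [hu a ha, hu a' (by rw [← hh]; exact ha)]
  congr 1
  rw [ZMod.natCast_eq_natCast_iff]
  exact Nat.ModEq.of_dvd hd hh

lemma sum_nonprim {b : ℕ} (hb : b.Prime) (χ : DirichletCharacter ℂ (b ^ 2))
    (h : ¬ χ.IsPrimitive) : Shat b χ = 0 := by
  have hb0 := hb.pos
  unfold Shat
  rw [← sum_fiberwise_of_maps_to (s := range (b ^ 2)) (t := range b) (g := fun a => a % b)
    (fun a _ => mem_range.2 (Nat.mod_lt a hb0)), sum_eq_zero, mul_zero]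
  intro r hr
  rw [mem_range] at hr
  rcases Nat.eq_zero_or_pos r with rfl | hr0
  · refine sum_eq_zero fun a ha => ?_
    rw [mem_filter] at ha
    rw [char_zero hb χ ha.2]; simp
  · have hrr : r % b = r := Nat.mod_eq_of_lt hr
    have hr1 : r % b ≠ 0 := by omega
    have hset : (range (b ^ 2)).filter (fun a => a % b = r) = cosetUnits b r := by
      ext x; rw [mem_cu hb hr1, mem_filter, mem_range, hrr]
    rw [hset]
    have : ∀ x ∈ cosetUnits b r, (Scirc b x : ℂ) * starRingEnd ℂ (χ (x : ZMod (b ^ 2)))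
        = (((S b x : ℝ) - (1 / (b : ℝ)) * ∑ a' ∈ cosetUnits b r, (S b a' : ℝ) : ℝ) : ℂ) *
          starRingEnd ℂ (χ (r : ZMod (b ^ 2))) := by
      intro x hx
      rw [mem_cu hb hr1] at hx
      rw [char_const hb χ h hr1 hx.2.symm]
      have : cosetUnits b x = cosetUnits b r := by
        unfold cosetUnits; rw [hx.2]
      unfold Scirc
      rw [this]
    rw [sum_congr rfl this, ← sum_mul, ← Complex.ofReal_sum, sum_sub_distrib, sum_const,
      card_cu hb hr1, nsmul_eq_mul]
    have : (b : ℝ) ≠ 0 := by exact_mod_cast hb0.ne'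
    rw [← mul_assoc, mul_one_div_cancel this, one_mul, sub_self]
    simp

lemma inversion {b : ℕ} (hb : b.Prime) {a : ℕ} (ha : a < b ^ 2) (hc : a % b ≠ 0) :
    (Scirc b a : ℂ) = ∑ χ ∈ Finset.univ.filter
          (fun χ : DirichletCharacter ℂ (b ^ 2) => χ.IsPrimitive ∧ χ.Odd),
          Shat b χ * χ (a : ZMod (b ^ 2)) := by
  have hb0 := hb.pos
  have : NeZero (b ^ 2) := ⟨(pow_pos hb0 2).ne'⟩
  rw [sum_filter_of_ne]
  swap
  · intro χ _ hne
    by_contra hcon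
    apply hne
    by_cases hp : χ.IsPrimitive
    · rw [sum_even hb χ (fun ho => hcon ⟨hp, ho⟩), zero_mul]
    · rw [sum_nonprim hb χ hp, zero_mul]
  have hφ : ((b ^ 2).totient : ℂ) ≠ 0 := by
    exact_mod_cast (Nat.totient_pos.2 (pow_pos hb0 2)).ne'
  have orth : ∀ x ∈ range (b ^ 2),
      ∑ χ : DirichletCharacter ℂ (b ^ 2), starRingEnd ℂ (χ (x : ZMod (b ^ 2))) * χ (a : ZMod (b ^ 2))
        = if x = a then ((b ^ 2).totient : ℂ) else 0 := by
    intro x hx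
    rw [mem_range] at hx
    by_cases hx0 : x % b = 0
    · rw [if_neg (by rintro rfl; exact hc hx0)]
      exact sum_eq_zero fun χ _ => by rw [char_zero hb χ hx0]; simp
    · have hux : IsUnit (x : ZMod (b ^ 2)) := (ZMod.isUnit_iff_coprime _ _).2 ((gcd_iff hb x).2 hx0)
      have h1 := DirichletCharacter.sum_char_inv_mul_char_eq ℂ hux (a : ZMod (b ^ 2))
      have h2 : ((x : ZMod (b ^ 2)) = (a : ZMod (b ^ 2))) ↔ x = a := by
        rw [ZMod.natCast_eq_natCast_iff']
        rw [Nat.mod_eq_of_lt hx, Nat.mod_eq_of_lt ha]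
      have h3 : ∀ χ : DirichletCharacter ℂ (b ^ 2),
          starRingEnd ℂ (χ (x : ZMod (b ^ 2))) = χ ((x : ZMod (b ^ 2))⁻¹) := by
        intro χ
        have h4 : χ ((x : ZMod (b ^ 2))⁻¹) * χ (x : ZMod (b ^ 2)) = 1 := by
          rw [← map_mul, ZMod.inv_mul_of_unit _ hux, map_one]
        have h5 : starRingEnd ℂ (χ (x : ZMod (b ^ 2))) * χ (x : ZMod (b ^ 2)) = 1 := by
          rw [← Complex.normSq_eq_conj_mul_self, Complex.normSq_eq_norm_sq]
          have := χ.unit_norm_eq_one hux.unit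
          rw [IsUnit.unit_spec] at this
          rw [this]; simp
        exact mul_right_cancel₀ (right_ne_zero_of_mul_eq_one h4) (h5.trans h4.symm)
      simp only [h3]
      rw [h1]
      simp only [h2]
  unfold Shat
  simp only [mul_assoc, sum_mul]
  rw [← mul_sum, sum_comm]
  simp only [← mul_sum]
  rw [sum_congr rfl (fun x hx => by rw [orth x hx])]
  simp only [mul_ite, mul_zero]
  rw [sum_ite_eq', if_pos (mem_range.2 ha)]
  field_simp

end Collision

open Collision in
theorem stmt14 (b : ℕ) (hb : b.Prime) (s : ℝ) (hs : 1 < s) :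
    ∑' p : {p : ℕ // p.Prime ∧ b ^ 2 < p},
        ((Scirc b ((p : ℕ) % b ^ 2) : ℝ) : ℂ) * ((p : ℕ) : ℂ) ^ (-(s : ℂ))
      = ∑ χ ∈ Finset.univ.filter
          (fun χ : DirichletCharacter ℂ (b ^ 2) => χ.IsPrimitive ∧ χ.Odd),
          Shat b χ * ∑' p : {p : ℕ // p.Prime ∧ b ^ 2 < p},
            χ ((p : ℕ) : ZMod (b ^ 2)) * ((p : ℕ) : ℂ) ^ (-(s : ℂ)) := by
  have hsum : ∀ χ : DirichletCharacter ℂ (b ^ 2),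
      Summable (fun p : {p : ℕ // p.Prime ∧ b ^ 2 < p} =>
        χ ((p : ℕ) : ZMod (b ^ 2)) * ((p : ℕ) : ℂ) ^ (-(s : ℂ))) := by
    intro χ
    have h1 : Summable (fun n : ℕ => (n : ℝ) ^ (-s)) := Real.summable_nat_rpow.2 (by linarith)
    refine Summable.of_norm_bounded (h1.subtype {p : ℕ | p.Prime ∧ b ^ 2 < p}) ?_
    rintro ⟨p, hp⟩
    have hp0 : 0 < p := hp.1.pos
    rw [norm_mul]
    have : ‖((p : ℕ) : ℂ) ^ (-(s : ℂ))‖ = (p : ℝ) ^ (-s) := by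
      rw [Complex.norm_natCast_cpow_of_pos hp0]; simp
    simp only [Function.comp]
    rw [this]
    exact mul_le_of_le_one_left (Real.rpow_nonneg (Nat.cast_nonneg _) _) (χ.norm_le_one _)
  simp_rw [← tsum_mul_left]
  rw [← Summable.tsum_finsetSum (fun χ _ => (hsum χ).mul_left _)]
  refine tsum_congr ?_
  rintro ⟨p, hp, hlt⟩
  have hdvd : b ∣ b ^ 2 := dvd_pow_self b (by norm_num)
  have hbp : b < p := lt_of_le_of_lt (Nat.le_of_dvd (pow_pos hb.pos 2) hdvd) hlt
  have hc : (p % b ^ 2) % b ≠ 0 := by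
    rw [Nat.mod_mod_of_dvd _ hdvd]
    intro h
    exact hbp.ne ((Nat.prime_dvd_prime_iff_eq hb hp).1 (Nat.dvd_of_mod_eq_zero h))
  simp only
  rw [inversion hb (Nat.mod_lt p (pow_pos hb.pos 2)) hc, sum_mul]
  refine sum_congr rfl fun χ _ => ?_
  rw [ZMod.natCast_mod, mul_assoc]
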